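/- Let p, q, r, s > 0 be real numbers with p + q = r + s and sp > rq. Let G = (x₀, y₀) ∈ ℝ² be the point lying on the line through (−p, 0) and (0, r) and also on the line through (q, 0) and (0, −s) (this point exists and is unique since sp ≠ rq). Then x₀ > 0, y₀ > 0, and x₀ + p = y₀ + s. (Equivalently: the smallest axis-parallel rectangle containing the triangle with vertices (−p, 0), (0, −s), G is a square.) -/

import Mathlib

/-!
The lines have equations `r x - p y = -p r` and `s x - q y = q s`. With the determinant
`D = s p - r q > 0`, this gives `D x₀ = p q (r + s)` and `D y₀ = r s (p + q)`, both positive.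
The difference `(x₀ + p) - (y₀ + s)`, multiplied by `D`, vanishes identically once `q` is
replaced by `r + s - p`.
-/

/-- Let `p, q, r, s > 0` with `p + q = r + s` and `s*p > r*q`. If
`G = (x₀, y₀)` lies on the line through `(-p, 0)` and `(0, r)` and on the line through
`(q, 0)` and `(0, -s)`, then `x₀ > 0`, `y₀ > 0`, and `x₀ + p = y₀ + s` (so the smallest
axis-parallel rectangle containing the triangle with vertices `(-p, 0)`, `(0, -s)`, `G` is
a square). -/
theorem pappus_square (p q r s : ℝ) (hp : 0 < p) (hq : 0 < q) (hr : 0 < r) (hs : 0 < s)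
    (hsum : p + q = r + s) (hdet : r * q < s * p) (x₀ y₀ : ℝ)
    (hline₁ : ∃ a : ℝ, x₀ = (1 - a) * (-p) + a * 0 ∧ y₀ = (1 - a) * 0 + a * r)
    (hline₂ : ∃ b : ℝ, x₀ = (1 - b) * q + b * 0 ∧ y₀ = (1 - b) * 0 + b * (-s)) :
    0 < x₀ ∧ 0 < y₀ ∧ x₀ + p = y₀ + s := by
  obtain ⟨a, hxa, hya⟩ := hline₁
  obtain ⟨b, hxb, hyb⟩ := hline₂
  have h₁ : r * x₀ - p * y₀ = -(p * r) := by rw [hxa, hya]; ring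
  have h₂ : s * x₀ - q * y₀ = q * s := by rw [hxb, hyb]; ring
  have hD : 0 < s * p - r * q := sub_pos.mpr hdet
  -- Cramer rule applied to the two line equations.
  have hx : (s * p - r * q) * x₀ = p * q * (r + s) := by linear_combination p * h₂ - q * h₁
  have hy : (s * p - r * q) * y₀ = r * s * (p + q) := by linear_combination r * h₂ - s * h₁
  refine ⟨pos_of_mul_pos_right (hx ▸ by positivity) hD.le,
    pos_of_mul_pos_right (hy ▸ by positivity) hD.le, ?_⟩
  apply mul_left_cancel₀ (ne_of_gt hD)
  -- After eliminating `q`, the claim times the determinant is a polynomial identity.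
  obtain rfl : q = r + s - p := by linarith
  linear_combination hx - hy
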